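/- arXiv:2508.11556 — 2 statements merged into one kernel-verified Lean document; each statement's English description precedes it below -/
import Mathlib

section
/- Let W ∈ ℝ^{d_w×T} and suppose there exists, for some integer d⊥ ≥ 1, a matrix W⊥ ∈ {−1,0,1}^{T×d⊥} with W W⊥ = 0. Let μ be a probability measure on ℝ^{d_x×T} (the distribution of the covariate matrix X) such that for every nonzero b ∈ ℝ^{d_x}, the set {x ∈ ℝ^{d_x×T} : bᵀ x W⊥ = 0} has μ-measure strictly less than 1. Let β, β̃ ∈ ℝ^{d_x}, and let ν and ν̃ be measurable families (Markov kernels) assigning to each x ∈ ℝ^{d_x×T} probability measures ν_x and ν̃_x on ℝ^{d_w}. If for μ-almost every x and every y ∈ {0,1}^T one has ∫ P_{β,a}(y | x) dν_x(a) = ∫ P_{β̃,a}(y | x) dν̃_x(a), then β = β̃. -/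
open MeasureTheory ProbabilityTheory

/-- The static logit probability of outcome `y ∈ {0,1}^T`:
`P_{β,a}(y | x) = ∏_t exp(y_t (x_tᵀβ + w_tᵀa)) / (1 + exp(x_tᵀβ + w_tᵀa))`. -/
noncomputable def staticLogitP {T dw dx : ℕ}
    (w : Fin T → Fin dw → ℝ) (x : Fin T → Fin dx → ℝ)
    (β : Fin dx → ℝ) (a : Fin dw → ℝ) (y : Fin T → ℝ) : ℝ :=
  ∏ t, Real.exp (y t * ((∑ i, x t i * β i) + ∑ k, w t k * a k)) /
      (1 + Real.exp ((∑ i, x t i * β i) + ∑ k, w t k * a k))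

/-- The linear index `x_tᵀβ + w_tᵀa` enters the log-odds of two outcomes only through their
difference. -/
theorem staticLogitP_eq_exp_mul {T dw dx : ℕ}
    (w : Fin T → Fin dw → ℝ) (x : Fin T → Fin dx → ℝ)
    (β : Fin dx → ℝ) (a : Fin dw → ℝ) (y z : Fin T → ℝ) :
    staticLogitP w x β a y =
      Real.exp (∑ t, (y t - z t) * ((∑ i, x t i * β i) + ∑ k, w t k * a k)) *
        staticLogitP w x β a z := by
  unfold staticLogitP
  rw [Real.exp_sum, ← Finset.prod_mul_distrib]
  refine Finset.prod_congr rfl fun t _ => ?_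
  rw [← mul_div_assoc, ← Real.exp_add]
  ring_nf

theorem staticLogitP_pos {T dw dx : ℕ}
    (w : Fin T → Fin dw → ℝ) (x : Fin T → Fin dx → ℝ)
    (β : Fin dx → ℝ) (a : Fin dw → ℝ) (y : Fin T → ℝ) :
    0 < staticLogitP w x β a y :=
  Finset.prod_pos fun t _ => by positivity

theorem staticLogitP_le_one {T dw dx : ℕ}
    (w : Fin T → Fin dw → ℝ) (x : Fin T → Fin dx → ℝ)
    (β : Fin dx → ℝ) (a : Fin dw → ℝ) (y : Fin T → ℝ) (hy : ∀ t, y t = 0 ∨ y t = 1) :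
    staticLogitP w x β a y ≤ 1 := by
  refine Finset.prod_le_one (fun t _ => by positivity) fun t _ => ?_
  rw [div_le_one (by positivity)]
  rcases hy t with h | h <;> simp [h, Real.exp_nonneg]

theorem continuous_staticLogitP {T dw dx : ℕ}
    (w : Fin T → Fin dw → ℝ) (x : Fin T → Fin dx → ℝ)
    (β : Fin dx → ℝ) (y : Fin T → ℝ) :
    Continuous fun a => staticLogitP w x β a y := by
  unfold staticLogitP
  refine continuous_finsetProd _ fun t _ => ?_
  exact Continuous.div (by fun_prop) (by fun_prop) fun a => by positivity

theorem integral_staticLogitP_pos {T dw dx : ℕ}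
    (w : Fin T → Fin dw → ℝ) (x : Fin T → Fin dx → ℝ)
    (β : Fin dx → ℝ) (y : Fin T → ℝ) (hy : ∀ t, y t = 0 ∨ y t = 1)
    (ρ : Measure (Fin dw → ℝ)) [IsProbabilityMeasure ρ] :
    0 < ∫ a, staticLogitP w x β a y ∂ρ := by
  have hint : Integrable (fun a => staticLogitP w x β a y) ρ := by
    refine Integrable.of_bound (continuous_staticLogitP w x β y).aestronglyMeasurable 1
      (Filter.Eventually.of_forall fun a => ?_)
    rw [Real.norm_of_nonneg (staticLogitP_pos w x β a y).le]
    exact staticLogitP_le_one w x β a y hy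
  rw [integral_pos_iff_support_of_nonneg (fun a => (staticLogitP_pos w x β a y).le) hint]
  have hsupp : (Function.support fun a => staticLogitP w x β a y) = Set.univ :=
    Set.eq_univ_of_forall fun a => (staticLogitP_pos w x β a y).ne'
  simp [hsupp]

/-- Outcomes whose difference is orthogonal to the weights have mixture log-odds that do not
depend on the mixing distribution. -/
theorem integral_staticLogitP_eq_exp_mul {T dw dx : ℕ}
    (w : Fin T → Fin dw → ℝ) (x : Fin T → Fin dx → ℝ)
    (β : Fin dx → ℝ) (y z : Fin T → ℝ) (horth : ∀ j, ∑ t, w t j * (y t - z t) = 0)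
    (ρ : Measure (Fin dw → ℝ)) :
    ∫ a, staticLogitP w x β a y ∂ρ =
      Real.exp (∑ t, (y t - z t) * ∑ i, x t i * β i) * ∫ a, staticLogitP w x β a z ∂ρ := by
  rw [← integral_const_mul]
  congr 1 with a
  have hw : ∑ t, (y t - z t) * ∑ k, w t k * a k = 0 := by
    simp only [Finset.mul_sum]
    rw [Finset.sum_comm]
    refine Finset.sum_eq_zero fun k _ => ?_
    calc ∑ t, (y t - z t) * (w t k * a k) = (∑ t, w t k * (y t - z t)) * a k := by
          rw [Finset.sum_mul]
          exact Finset.sum_congr rfl fun t _ => by ring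
      _ = 0 := by rw [horth k, zero_mul]
  rw [staticLogitP_eq_exp_mul w x β a y z]
  simp only [mul_add, Finset.sum_add_distrib, hw, add_zero]

/-- Suppose `W W⊥ = 0` for some matrix `W⊥ ∈ {-1,0,1}^{T × d⊥}`
(`d⊥ ≥ 1`), and let `μ` be a probability distribution of the covariates such that for
every nonzero `b ∈ ℝ^{d_x}`, the set `{x : bᵀ x W⊥ = 0}` has `μ`-measure `< 1`.
If the mixtures of the logit probabilities over Markov kernels `ν, ν̃` agree for
`μ`-almost every `x` and every binary outcome `y`, then `β = β̃`. -/
theorem stmt3 {T dw dx dp : ℕ} (hT : 1 ≤ T) (hdw : 1 ≤ dw) (hdx : 1 ≤ dx) (hdp : 1 ≤ dp)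
    (w : Fin T → Fin dw → ℝ) (Wp : Fin T → Fin dp → ℝ)
    (hWp : ∀ t k, Wp t k = -1 ∨ Wp t k = 0 ∨ Wp t k = 1)
    (horth : ∀ j k, ∑ t, w t j * Wp t k = 0)
    (μ : Measure (Fin T → Fin dx → ℝ)) [IsProbabilityMeasure μ]
    (hμ : ∀ b : Fin dx → ℝ, b ≠ 0 →
      μ {x | ∀ k, ∑ t, (∑ i, b i * x t i) * Wp t k = 0} < 1)
    (β β' : Fin dx → ℝ)
    (ν ν' : Kernel (Fin T → Fin dx → ℝ) (Fin dw → ℝ))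
    [IsMarkovKernel ν] [IsMarkovKernel ν']
    (h : ∀ᵐ x ∂μ, ∀ y : Fin T → ℝ, (∀ t, y t = 0 ∨ y t = 1) →
      ∫ a, staticLogitP w x β a y ∂(ν x) = ∫ a, staticLogitP w x β' a y ∂(ν' x)) :
    β = β' := by
  by_contra hne
  refine (hμ (β - β') (sub_ne_zero.2 hne)).ne ?_
  rw [← measure_univ (μ := μ)]
  refine measure_congr (Filter.eventuallyEq_univ.2 ?_)
  filter_upwards [h] with x hx k
  let y : Fin T → ℝ := fun t => if Wp t k = 1 then 1 else 0
  let z : Fin T → ℝ := fun t => if Wp t k = -1 then 1 else 0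
  have hy : ∀ t, y t = 0 ∨ y t = 1 := fun t => by
    by_cases hc : Wp t k = 1 <;> simp [y, hc]
  have hz : ∀ t, z t = 0 ∨ z t = 1 := fun t => by
    by_cases hc : Wp t k = -1 <;> simp [z, hc]
  have hyz : ∀ t, y t - z t = Wp t k := fun t => by
    rcases hWp t k with hc | hc | hc <;> norm_num [y, z, hc]
  have horth' : ∀ j, ∑ t, w t j * (y t - z t) = 0 := fun j => by
    simpa only [hyz] using horth j k
  have hxy := hx y hy
  rw [integral_staticLogitP_eq_exp_mul w x β y z horth',
    integral_staticLogitP_eq_exp_mul w x β' y z horth', ← hx z hz] at hxy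
  have hexp := Real.exp_injective
    (mul_right_cancel₀ (integral_staticLogitP_pos w x β z hz (ν x)).ne' hxy)
  simp only [hyz] at hexp
  rw [← sub_eq_zero, ← Finset.sum_sub_distrib] at hexp
  rw [← hexp]
  refine Finset.sum_congr rfl fun t _ => ?_
  rw [← mul_sub, ← Finset.sum_sub_distrib, mul_comm]
  congr 1
  exact Finset.sum_congr rfl fun i _ => by simp only [Pi.sub_apply]; ring
end

section
/- Suppose each weight vector w_t (t = 1,…,T) is a standard basis vector in ℝ^{d_w}, y_0 ∈ {0,1} is fixed, and there exist y, ỹ ∈ {0,1}^T (with ỹ_0 := y_0) satisfying Σ_{t=1}^T w_t y_t = Σ_{t=1}^T w_t ỹ_t, Σ_{t=1}^T w_t y_{t−1} = Σ_{t=1}^T w_t ỹ_{t−1}, and Σ_{t=1}^T y_t y_{t−1} ≠ Σ_{t=1}^T ỹ_t ỹ_{t−1}. Then the autoregressive parameter is identified: for any γ, γ̃ ∈ ℝ and any probability measures μ, μ̃ on ℝ^{d_w}, if ∫ P_{γ,a}(y′) dμ(a) = ∫ P_{γ̃,a}(y′) dμ̃(a) for every y′ ∈ {0,1}^T, then γ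 = γ̃. -/
open MeasureTheory

/-- The lagged outcome `y_{t-1}` (with fixed initial value `y₀` at `t = 1`),
0-indexed in `t`. -/
def ylag {T : ℕ} (y0 : ℝ) (y : Fin T → ℝ) (t : Fin T) : ℝ :=
  if t.val = 0 then y0
  else y ⟨t.val - 1, lt_of_le_of_lt (Nat.sub_le _ _) t.isLt⟩

/-- The AR(1) logit probability of `y ∈ {0,1}^T` given `A = a`:
`P_{γ,a}(y) = ∏_t exp(y_t (γ y_{t-1} + w_tᵀa)) / (1 + exp(γ y_{t-1} + w_tᵀa))`. -/
noncomputable def ar1P {T dw : ℕ} (γ : ℝ) (y0 : ℝ)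
    (w : Fin T → Fin dw → ℝ) (a : Fin dw → ℝ) (y : Fin T → ℝ) : ℝ :=
  ∏ t, Real.exp (y t * (γ * ylag y0 y t + ∑ k, w t k * a k)) /
      (1 + Real.exp (γ * ylag y0 y t + ∑ k, w t k * a k))

theorem ylag_eq_zero_or_one {T : ℕ} {y0 : ℝ} (hy0 : y0 = 0 ∨ y0 = 1) {y : Fin T → ℝ}
    (hy : ∀ t, y t = 0 ∨ y t = 1) (t : Fin T) : ylag y0 y t = 0 ∨ ylag y0 y t = 1 := by
  unfold ylag
  split_ifs
  · exact hy0
  · exact hy _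

theorem ar1P_pos {T dw : ℕ} (γ y0 : ℝ) (w : Fin T → Fin dw → ℝ) (a : Fin dw → ℝ)
    (y : Fin T → ℝ) : 0 < ar1P γ y0 w a y := by
  unfold ar1P
  exact Finset.prod_pos fun t _ => by positivity

theorem ar1P_le_one {T dw : ℕ} (γ y0 : ℝ) (w : Fin T → Fin dw → ℝ) (a : Fin dw → ℝ)
    {y : Fin T → ℝ} (hy : ∀ t, y t = 0 ∨ y t = 1) : ar1P γ y0 w a y ≤ 1 := by
  unfold ar1P
  refine Finset.prod_le_one (fun t _ => by positivity) fun t _ => ?_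
  rw [div_le_one (by positivity)]
  rcases hy t with h | h <;> rw [h]
  · simp [Real.exp_nonneg]
  · simp

theorem continuous_ar1P {T dw : ℕ} (γ y0 : ℝ) (w : Fin T → Fin dw → ℝ) (y : Fin T → ℝ) :
    Continuous fun a => ar1P γ y0 w a y := by
  unfold ar1P
  refine continuous_finsetProd _ fun t _ => Continuous.div (by fun_prop) (by fun_prop) fun a => ?_
  positivity

theorem integral_ar1P_pos {T dw : ℕ} (γ y0 : ℝ) (w : Fin T → Fin dw → ℝ)
    (μ : Measure (Fin dw → ℝ)) [IsProbabilityMeasure μ] {y : Fin T → ℝ}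
    (hy : ∀ t, y t = 0 ∨ y t = 1) : 0 < ∫ a, ar1P γ y0 w a y ∂μ := by
  have hint : Integrable (fun a => ar1P γ y0 w a y) μ := by
    refine Integrable.of_bound (continuous_ar1P γ y0 w y).aestronglyMeasurable 1 (.of_forall ?_)
    intro a
    rw [Real.norm_of_nonneg (ar1P_pos γ y0 w a y).le]
    exact ar1P_le_one γ y0 w a hy
  rw [integral_pos_iff_support_of_nonneg (fun a => (ar1P_pos γ y0 w a y).le) hint]
  have hsupp : Function.support (fun a => ar1P γ y0 w a y) = Set.univ :=
    Set.eq_univ_of_forall fun a => (ar1P_pos γ y0 w a y).ne'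
  simp [hsupp]

/-- With standard basis weights, `log P_{γ,a}(y)` depends on `y` only through `Σ_t w_t y_t`,
`Σ_t w_t y_{t-1}` and `Σ_t y_t y_{t-1}`. -/
theorem ar1P_eq_exp {T dw : ℕ} (γ : ℝ) {y0 : ℝ} (hy0 : y0 = 0 ∨ y0 = 1)
    {w : Fin T → Fin dw → ℝ} (hw : ∀ t, ∃ j : Fin dw, w t = Pi.single j 1) (a : Fin dw → ℝ)
    {y : Fin T → ℝ} (hy : ∀ t, y t = 0 ∨ y t = 1) :
    ar1P γ y0 w a y = Real.exp (γ * ∑ t, y t * ylag y0 y t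
      + ∑ k, a k * ∑ t, w t k * y t
      - ∑ k, (Real.log (1 + Real.exp (γ + a k)) - Real.log (1 + Real.exp (a k)))
          * ∑ t, w t k * ylag y0 y t
      - ∑ t, Real.log (1 + Real.exp (∑ k, w t k * a k))) := by
  have hfactor : ∀ t, Real.exp (y t * (γ * ylag y0 y t + ∑ k, w t k * a k)) /
      (1 + Real.exp (γ * ylag y0 y t + ∑ k, w t k * a k)) =
      Real.exp (γ * (y t * ylag y0 y t) + ∑ k, a k * (w t k * y t)
        - ∑ k, (Real.log (1 + Real.exp (γ + a k)) - Real.log (1 + Real.exp (a k)))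
          * (w t k * ylag y0 y t)
        - Real.log (1 + Real.exp (∑ k, w t k * a k))) := by
    intro t
    obtain ⟨j, hj⟩ := hw t
    have hpos : 0 < 1 + Real.exp (γ * ylag y0 y t + a j) := by positivity
    simp only [hj, Pi.single_apply, ite_mul, mul_ite, one_mul, zero_mul, mul_zero,
      Finset.sum_ite_eq', Finset.mem_univ, if_true]
    rw [← Real.exp_log hpos, ← Real.exp_sub]
    congr 1
    rcases ylag_eq_zero_or_one hy0 hy t with h | h <;> rw [h] <;> ring_nf
  unfold ar1P
  rw [Finset.prod_congr rfl fun t _ => hfactor t, ← Real.exp_sum]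
  simp only [Finset.sum_sub_distrib, Finset.sum_add_distrib, Finset.mul_sum]
  rw [Finset.sum_comm (f := fun t k => a k * (w t k * y t)),
    Finset.sum_comm (f := fun t k => (Real.log (1 + Real.exp (γ + a k))
      - Real.log (1 + Real.exp (a k))) * (w t k * ylag y0 y t))]

theorem ar1P_eq_exp_mul_ar1P {T dw : ℕ} (γ : ℝ) {y0 : ℝ} (hy0 : y0 = 0 ∨ y0 = 1)
    {w : Fin T → Fin dw → ℝ} (hw : ∀ t, ∃ j : Fin dw, w t = Pi.single j 1) (a : Fin dw → ℝ)
    {y y' : Fin T → ℝ} (hy : ∀ t, y t = 0 ∨ y t = 1) (hy' : ∀ t, y' t = 0 ∨ y' t = 1)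
    (hsum : ∀ k, ∑ t, w t k * y t = ∑ t, w t k * y' t)
    (hlag : ∀ k, ∑ t, w t k * ylag y0 y t = ∑ t, w t k * ylag y0 y' t) :
    ar1P γ y0 w a y =
      Real.exp (γ * (∑ t, y t * ylag y0 y t - ∑ t, y' t * ylag y0 y' t)) *
        ar1P γ y0 w a y' := by
  rw [ar1P_eq_exp γ hy0 hw a hy, ar1P_eq_exp γ hy0 hw a hy', ← Real.exp_add]
  simp only [hsum, hlag]
  congr 1
  ring

/-- Suppose each `w_t` is a standard basis vector of `ℝ^{d_w}`, the
initial condition `y₀ ∈ {0,1}` is fixed, and there exist binary sequences `y, y'`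
satisfying `Σ_t w_t y_t = Σ_t w_t y'_t`, `Σ_t w_t y_{t-1} = Σ_t w_t y'_{t-1}`, and
`Σ_t y_t y_{t-1} ≠ Σ_t y'_t y'_{t-1}`. Then the autoregressive parameter is
identified: for any `γ, γ'` and any probability measures `μ, μ'` on `ℝ^{d_w}`, if the
mixed probabilities agree for every binary outcome sequence, then `γ = γ'`. -/
theorem stmt7 {T dw : ℕ} (hT : 1 ≤ T) (hdw : 1 ≤ dw)
    (w : Fin T → Fin dw → ℝ)
    (hw : ∀ t, ∃ j : Fin dw, w t = Pi.single j 1)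
    (y0 : ℝ) (hy0 : y0 = 0 ∨ y0 = 1)
    (hex : ∃ y y' : Fin T → ℝ,
      (∀ t, y t = 0 ∨ y t = 1) ∧ (∀ t, y' t = 0 ∨ y' t = 1) ∧
      (∀ k, ∑ t, w t k * y t = ∑ t, w t k * y' t) ∧
      (∀ k, ∑ t, w t k * ylag y0 y t = ∑ t, w t k * ylag y0 y' t) ∧
      ∑ t, y t * ylag y0 y t ≠ ∑ t, y' t * ylag y0 y' t)
    (γ γ' : ℝ) (μ μ' : Measure (Fin dw → ℝ))
    (hμ : IsProbabilityMeasure μ) (hμ' : IsProbabilityMeasure μ')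
    (h : ∀ y' : Fin T → ℝ, (∀ t, y' t = 0 ∨ y' t = 1) →
      ∫ a, ar1P γ y0 w a y' ∂μ = ∫ a, ar1P γ' y0 w a y' ∂μ') :
    γ = γ' := by
  obtain ⟨y, y', hy, hy', hsum, hlag, hne⟩ := hex
  have hratio := h y hy
  simp only [fun δ a => ar1P_eq_exp_mul_ar1P δ hy0 hw a hy hy' hsum hlag,
    integral_const_mul] at hratio
  rw [h y' hy'] at hratio
  have hexp := mul_right_cancel₀ (integral_ar1P_pos γ' y0 w μ' hy').ne' hratio
  exact mul_right_cancel₀ (sub_ne_zero.mpr hne) (Real.exp_injective hexp)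
end
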